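/- Let q be a prime and let k be an integer with gcd(k, q) = 1. Then Σ_χ τ(χ)² · χ̄(k) = (q − 1) · Σ_{a=1}^{q−1} e((a + k·a*)/q) − 1, where the outer sum runs over all nontrivial Dirichlet characters χ modulo q, a* denotes a multiplicative inverse of a modulo q, and the inner sum is the Kloosterman sum S(1, k; q). -/

import Mathlib

open Complex

open scoped Classical

/-- The additive character `e(a/q) = e^{2πi a/q}` on `ZMod q`. -/
noncomputable def eZMod (q : ℕ) [NeZero q] (a : ZMod q) : ℂ :=
  Complex.exp (2 * Real.pi * I * a.val / q)

/-- The Gauss sum `τ(χ) = ∑_{a mod q} χ(a) e(a/q)` of a Dirichlet character mod `q`. -/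
noncomputable def gaussSumE {q : ℕ} [NeZero q] (χ : DirichletCharacter ℂ q) : ℂ :=
  ∑ a : ZMod q, χ a * eZMod q a

/-!
Gauss sums are the Fourier coefficients of an additive character with respect to the
multiplicative characters, so summing `τ(χ)² χ̄(k)` over *all* `χ` inverts the Fourier transform of
a multiplicative convolution: it gives `φ(q) ∑_{uv = k} e((u + v)/q)`, which is `φ(q) S(1, k; q)`.
The trivial character contributes `τ(1)² = 1`.
-/

section Orthogonality

variable {M R : Type*} [CommMonoid M] [Finite M] [CommRing R] [IsDomain R]
  [HasEnoughRootsOfUnity R (Monoid.exponent Mˣ)] [Fintype (MulChar M R)]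

lemma sum_mulChar_apply_eq_zero {a : M} (ha : a ≠ 1) : ∑ χ : MulChar M R, χ a = 0 := by
  obtain ⟨η, hη⟩ := MulChar.exists_apply_ne_one_of_hasEnoughRootsOfUnity M R ha
  refine eq_zero_of_mul_eq_self_left hη ?_
  simp only [Finset.mul_sum, ← MulChar.mul_apply]
  exact Fintype.sum_bijective _ (Group.mulLeft_bijective η) _ _ fun _ ↦ rfl

lemma sum_mulChar_apply (a : M) :
    ∑ χ : MulChar M R, χ a = if a = 1 then (Nat.card Mˣ : R) else 0 := by
  split_ifs with ha
  · simp only [ha, map_one, Finset.sum_const, Finset.card_univ, nsmul_eq_mul, mul_one,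
      ← Nat.card_eq_fintype_card, MulChar.card_eq_card_units_of_hasEnoughRootsOfUnity M R]
  · exact sum_mulChar_apply_eq_zero ha

end Orthogonality

lemma mulChar_inv_apply_unit {M R : Type*} [CommMonoidWithZero M] [CommMonoidWithZero R]
    (χ : MulChar M R) (u : Mˣ) : χ⁻¹ u = χ ↑u⁻¹ := by
  rw [MulChar.inv_apply, Ring.inverse_unit]

lemma sum_mulChar_apply_mul_inv_apply {M R : Type*} [CommMonoidWithZero M] [Finite M] [CommRing R]
    [IsDomain R] [HasEnoughRootsOfUnity R (Monoid.exponent Mˣ)] [Fintype (MulChar M R)]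
    (a : M) (u : Mˣ) :
    ∑ χ : MulChar M R, χ a * χ⁻¹ u = if a = u then (Nat.card Mˣ : R) else 0 := by
  simp only [mulChar_inv_apply_unit, ← map_mul, sum_mulChar_apply, Units.mul_inv_eq_one]

lemma gaussSum_eq_sum_units {R R' : Type*} [CommRing R] [Fintype R] [Fintype Rˣ] [CommRing R']
    (χ : MulChar R R') (ψ : AddChar R R') :
    gaussSum χ ψ = ∑ u : Rˣ, χ u * ψ u := by
  refine (Fintype.sum_of_injective Units.val Units.val_injective _ _ (fun a ha ↦ ?_)
    fun _ ↦ rfl).symm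
  rw [χ.map_nonunit ha, zero_mul]

/-- The Kloosterman sum of an additive character `ψ` of a commutative ring with finitely many
units. For `ψ = e(· / q)` on `ZMod q` it is the classical `S(m, n; q)`. -/
def kloostermanSum {R R' : Type*} [CommRing R] [Fintype Rˣ] [CommRing R'] (ψ : AddChar R R')
    (m n : R) : R' :=
  ∑ u : Rˣ, ψ (m * u + n * ↑u⁻¹)

section GaussSum

variable {R R' : Type*} [CommRing R] [Fintype R] [CommRing R'] [IsDomain R']
  [HasEnoughRootsOfUnity R' (Monoid.exponent Rˣ)] [Fintype (MulChar R R')]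

lemma sum_gaussSum_mul_inv_apply (ψ : AddChar R R') (u : Rˣ) :
    ∑ χ : MulChar R R', gaussSum χ ψ * χ⁻¹ u = Nat.card Rˣ * ψ u := by
  calc ∑ χ : MulChar R R', gaussSum χ ψ * χ⁻¹ u
      = ∑ a, (∑ χ : MulChar R R', χ a * χ⁻¹ u) * ψ a := by
        simp only [gaussSum, Finset.sum_mul]
        rw [Finset.sum_comm]
        simp only [mul_right_comm]
    _ = Nat.card Rˣ * ψ u := by
        simp only [sum_mulChar_apply_mul_inv_apply, ite_mul, zero_mul, Finset.sum_ite_eq',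
          Finset.mem_univ, if_true]

lemma sum_gaussSum_mul_gaussSum_mul_inv_apply [Fintype Rˣ] (ψ φ : AddChar R R') (k : Rˣ) :
    ∑ χ : MulChar R R', gaussSum χ ψ * gaussSum χ φ * χ⁻¹ k =
      Nat.card Rˣ * ∑ u : Rˣ, ψ u * φ (k * ↑u⁻¹) := by
  have apply_mul_inv_apply (χ : MulChar R R') (u : Rˣ) : χ u * χ⁻¹ k = χ⁻¹ ↑(k * u⁻¹) := by
    simp only [mulChar_inv_apply_unit, ← map_mul, mul_inv_rev, inv_inv, ← Units.val_mul]
  calc ∑ χ : MulChar R R', gaussSum χ ψ * gaussSum χ φ * χ⁻¹ k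
      = ∑ χ : MulChar R R', ∑ u : Rˣ, ψ u * (gaussSum χ φ * χ⁻¹ ↑(k * u⁻¹)) := by
        refine Finset.sum_congr rfl fun χ _ ↦ ?_
        rw [gaussSum_eq_sum_units χ ψ, mul_assoc, Finset.sum_mul]
        refine Finset.sum_congr rfl fun u _ ↦ ?_
        rw [← apply_mul_inv_apply]
        ring
    _ = ∑ u : Rˣ, ψ u * (Nat.card Rˣ * φ ↑(k * u⁻¹)) := by
        rw [Finset.sum_comm]
        simp only [← Finset.mul_sum, sum_gaussSum_mul_inv_apply]
    _ = Nat.card Rˣ * ∑ u : Rˣ, ψ u * φ (k * ↑u⁻¹) := by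
        simp only [Finset.mul_sum, mul_left_comm, Units.val_mul]

lemma sum_gaussSum_sq_mul_inv_apply [Fintype Rˣ] (ψ : AddChar R R') (k : Rˣ) :
    ∑ χ : MulChar R R', gaussSum χ ψ ^ 2 * χ⁻¹ k = Nat.card Rˣ * kloostermanSum ψ 1 k := by
  simp only [sq, sum_gaussSum_mul_gaussSum_mul_inv_apply, kloostermanSum, one_mul,
    AddChar.map_add_eq_mul]

end GaussSum

theorem stmt7_general {F R : Type*} [Field F] [Fintype F] [Fintype Fˣ] [CommRing R]
    [IsDomain R] [HasEnoughRootsOfUnity R (Monoid.exponent Fˣ)] [Fintype (MulChar F R)]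
    {ψ : AddChar F R} (hψ : ψ ≠ 1) {k : F} (hk : k ≠ 0) :
    ∑ χ ∈ Finset.univ.filter (fun χ : MulChar F R ↦ χ ≠ 1), gaussSum χ ψ ^ 2 * χ⁻¹ k =
      (Fintype.card F - 1 : R) * kloostermanSum ψ 1 k - 1 := by
  lift k to Fˣ using hk.isUnit
  have card_units : (Nat.card Fˣ : R) = Fintype.card F - 1 := by
    rw [Nat.card_units, Nat.card_eq_fintype_card, Nat.cast_pred Fintype.card_pos]
  have trivial_term : gaussSum (1 : MulChar F R) ψ ^ 2 * (1 : MulChar F R)⁻¹ k = 1 := by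
    rw [gaussSum_one_left hψ, inv_one, MulChar.one_apply_coe, neg_one_sq, one_mul]
  rw [Finset.filter_ne', eq_sub_iff_add_eq, ← card_units, ← sum_gaussSum_sq_mul_inv_apply,
    ← Finset.sum_erase_add _ _ (Finset.mem_univ 1), trivial_term]

lemma eZMod_eq_stdAddChar {q : ℕ} [NeZero q] (a : ZMod q) : eZMod q a = ZMod.stdAddChar a := by
  simpa only [Int.cast_natCast, ZMod.natCast_zmod_val, eZMod] using
    (ZMod.stdAddChar_coe (N := q) (a.val : ℤ)).symm

lemma gaussSumE_eq_gaussSum {q : ℕ} [NeZero q] (χ : DirichletCharacter ℂ q) :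
    gaussSumE χ = gaussSum χ ZMod.stdAddChar := by
  simp only [gaussSumE, gaussSum, eZMod_eq_stdAddChar]

lemma stdAddChar_ne_one {q : ℕ} [NeZero q] (hq : q ≠ 1) :
    (ZMod.stdAddChar : AddChar (ZMod q) ℂ) ≠ 1 := by
  have : Nontrivial (ZMod q) := ZMod.nontrivial_iff.mpr hq
  simpa only [AddChar.mulShift_one] using ZMod.isPrimitive_stdAddChar q one_ne_zero

lemma intCast_zmod_ne_zero_of_gcd_eq_one {q : ℕ} (hq : q ≠ 1) {k : ℤ} (h : Int.gcd k q = 1) :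
    (k : ZMod q) ≠ 0 := by
  have : Nontrivial (ZMod q) := ZMod.nontrivial_iff.mpr hq
  exact ((ZMod.coe_int_isUnit_iff_isCoprime k q).mpr
    (Int.isCoprime_iff_gcd_eq_one.mpr h).symm).ne_zero

/-- For `q` prime and `k` an integer with `gcd(k, q) = 1`,
`∑_{χ ≠ 1 mod q} τ(χ)² χ̄(k) = (q - 1) · S(1, k; q) − 1`, where
`S(1, k; q) = ∑_{a=1}^{q-1} e((a + k a*)/q)` is the Kloosterman sum (the sum running
over invertible residues `a` mod `q`, with `a*` the inverse of `a`), and the outer sum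
is over all nontrivial (equivalently, primitive) Dirichlet characters mod `q`. -/
theorem stmt7 (q : ℕ) [NeZero q] (hq : q.Prime) (k : ℤ) (h : Int.gcd k q = 1) :
    ∑ χ ∈ Finset.univ.filter (fun χ : DirichletCharacter ℂ q => χ ≠ 1),
        gaussSumE χ ^ 2 * (starRingEnd ℂ) (χ (k : ZMod q)) =
      (q - 1 : ℂ) *
          (∑ a : (ZMod q)ˣ,
            eZMod q ((a : ZMod q) + (k : ZMod q) * ((a⁻¹ : (ZMod q)ˣ) : ZMod q))) - 1 := by
  have : Fact q.Prime := ⟨hq⟩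
  simpa only [← MulChar.star_apply', ← starRingEnd_apply, kloostermanSum, one_mul, ZMod.card,
    gaussSumE_eq_gaussSum, eZMod_eq_stdAddChar] using
    stmt7_general (stdAddChar_ne_one hq.ne_one) (intCast_zmod_ne_zero_of_gcd_eq_one hq.ne_one h)
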